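/- arXiv:2312.04892 — 3 statements merged into one kernel-verified Lean document; each statement's English description precedes it below -/
import Mathlib

section
/- Let g_e ∈ ℝ, ω₀ > 0, X₀ > 0, and ρ₀ ∈ ℝ with a := ω₀² + g_e·ρ₀ > 0. Define V_P(ρ) = (1/2)·√a·√(ω₀² + g_e·ρ)·X₀² on the set of ρ with ω₀² + g_e·ρ > 0. Then: (i) V_P is differentiable there with V_P'(ρ) = (g_e·X₀²/4)·√a/√(ω₀² + g_e·ρ), which at ρ = ρ₀ equals g_e·X₀²/4; (ii) V_P is twice differentiable at ρ₀ and the coefficient of (ρ − ρ₀)² in its second-order Taylor expansion at ρ₀ equals −g_e²·X₀²/(16·a). In particular for g_e ≠ 0 this coefficient is strictly negative: the interaction generated after the pulse is always attractive and proportional to the squared phonon oscillation amplitude X₀². -/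
/-!
The adiabatically fixed amplitude makes the force `g X₀(ρ)² / 4` inversely proportional to the
square root of the squared frequency. As the squared frequency has slope `g` in the density, the
slope of the force has the sign of `-g²`: the interaction is attractive whatever the sign of the
coupling.
-/

open Topology

theorem hasDerivAt_const_add_const_mul {𝕜 : Type*} [NontriviallyNormedField 𝕜] (b c x : 𝕜) :
    HasDerivAt (fun y => b + c * y) c x := by
  simpa using ((hasDerivAt_id x).const_mul c).const_add b

theorem hasDerivAt_inv_sqrt_comp {f : ℝ → ℝ} {f' x : ℝ} (hf : HasDerivAt f f' x) (hx : 0 < f x) :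
    HasDerivAt (fun y => (√(f y))⁻¹) (-f' / (2 * f x * √(f x))) x := by
  refine ((hf.sqrt hx.ne').inv (Real.sqrt_ne_zero'.mpr hx)).congr_deriv ?_
  rw [Real.sq_sqrt hx.le]
  ring

/-- The potential `V_P(ρ)` generated by a phonon of squared frequency `κ + g ρ` whose oscillation
amplitude is `X₀` at the equilibrium density `ρ₀`. The bare squared frequency `κ = ω₀²` is a
parameter of its own, of arbitrary sign. -/
noncomputable def ponderomotivePotential (κ g X₀ ρ₀ ρ : ℝ) : ℝ :=
  1 / 2 * √(κ + g * ρ₀) * √(κ + g * ρ) * X₀ ^ 2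

/-- The time-averaged force `F_P(ρ) = g X₀(ρ)² / 4`, with `X₀(ρ)²` the squared amplitude fixed by
adiabatic invariance. As in the paper it is `dV_P/dρ`, without a minus sign. -/
noncomputable def ponderomotiveForce (κ g X₀ ρ₀ ρ : ℝ) : ℝ :=
  g * X₀ ^ 2 / 4 * √(κ + g * ρ₀) / √(κ + g * ρ)

section Ponderomotive

variable {κ g ρ : ℝ} (X₀ ρ₀ : ℝ)

theorem ponderomotiveForce_self (hρ₀ : 0 < κ + g * ρ₀) :
    ponderomotiveForce κ g X₀ ρ₀ ρ₀ = g * X₀ ^ 2 / 4 :=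
  mul_div_cancel_right₀ _ (Real.sqrt_ne_zero'.mpr hρ₀)

theorem hasDerivAt_ponderomotivePotential (hρ : 0 < κ + g * ρ) :
    HasDerivAt (ponderomotivePotential κ g X₀ ρ₀) (ponderomotiveForce κ g X₀ ρ₀ ρ) ρ := by
  have hsqrt := (hasDerivAt_const_add_const_mul κ g ρ).sqrt hρ.ne'
  refine ((hsqrt.const_mul (1 / 2 * √(κ + g * ρ₀))).mul_const (X₀ ^ 2)).congr_deriv ?_
  unfold ponderomotiveForce
  ring

theorem hasDerivAt_ponderomotiveForce (hρ : 0 < κ + g * ρ) :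
    HasDerivAt (ponderomotiveForce κ g X₀ ρ₀)
      (-(g ^ 2 * X₀ ^ 2) / (8 * (κ + g * ρ)) * (√(κ + g * ρ₀) / √(κ + g * ρ))) ρ := by
  have hinv := hasDerivAt_inv_sqrt_comp (hasDerivAt_const_add_const_mul κ g ρ) hρ
  refine (hinv.const_mul (g * X₀ ^ 2 / 4 * √(κ + g * ρ₀))).congr_deriv ?_
  field_simp
  ring

theorem deriv_ponderomotivePotential_eventuallyEq (hρ : 0 < κ + g * ρ) :
    deriv (ponderomotivePotential κ g X₀ ρ₀) =ᶠ[𝓝 ρ] ponderomotiveForce κ g X₀ ρ₀ := by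
  have hcont := (hasDerivAt_const_add_const_mul κ g ρ).continuousAt
  filter_upwards [hcont.eventually (lt_mem_nhds hρ)] with σ hσ
  exact (hasDerivAt_ponderomotivePotential X₀ ρ₀ hσ).deriv

theorem hasDerivAt_deriv_ponderomotivePotential (hρ : 0 < κ + g * ρ) :
    HasDerivAt (deriv (ponderomotivePotential κ g X₀ ρ₀))
      (-(g ^ 2 * X₀ ^ 2) / (8 * (κ + g * ρ)) * (√(κ + g * ρ₀) / √(κ + g * ρ))) ρ :=
  (hasDerivAt_ponderomotiveForce X₀ ρ₀ hρ).congr_of_eventuallyEq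
    (deriv_ponderomotivePotential_eventuallyEq X₀ ρ₀ hρ)

theorem hasDerivAt_deriv_ponderomotivePotential_self (hρ₀ : 0 < κ + g * ρ₀) :
    HasDerivAt (deriv (ponderomotivePotential κ g X₀ ρ₀))
      (-(g ^ 2 * X₀ ^ 2) / (8 * (κ + g * ρ₀))) ρ₀ := by
  simpa only [div_self (Real.sqrt_ne_zero'.mpr hρ₀), mul_one] using
    hasDerivAt_deriv_ponderomotivePotential X₀ ρ₀ hρ₀

end Ponderomotive

/-- For `V_P(ρ) = (1/2)√a·√(ω₀² + g_e ρ)·X₀²` with `a = ω₀² + g_e ρ₀ > 0`: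
(i) wherever `ω₀² + g_e ρ > 0`, `V_P' (ρ) = (g_e X₀²/4)·√a/√(ω₀² + g_e ρ)`, which at
`ρ₀` equals `g_e X₀²/4`; (ii) the quadratic Taylor coefficient of `V_P` at `ρ₀` is
`−g_e²X₀²/(16a)`, strictly negative for `g_e ≠ 0`. -/
theorem stmt_8 (g_e ω₀ X₀ ρ₀ : ℝ) (hω₀ : 0 < ω₀) (hX₀ : 0 < X₀)
    (ha : 0 < ω₀ ^ 2 + g_e * ρ₀) :
    let a : ℝ := ω₀ ^ 2 + g_e * ρ₀
    let VP : ℝ → ℝ := fun ρ =>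
      (1 / 2) * Real.sqrt a * Real.sqrt (ω₀ ^ 2 + g_e * ρ) * X₀ ^ 2
    (∀ ρ : ℝ, 0 < ω₀ ^ 2 + g_e * ρ →
      HasDerivAt VP (g_e * X₀ ^ 2 / 4 * Real.sqrt a / Real.sqrt (ω₀ ^ 2 + g_e * ρ)) ρ) ∧
    g_e * X₀ ^ 2 / 4 * Real.sqrt a / Real.sqrt (ω₀ ^ 2 + g_e * ρ₀) = g_e * X₀ ^ 2 / 4 ∧
    DifferentiableAt ℝ (deriv VP) ρ₀ ∧
    deriv (deriv VP) ρ₀ / 2 = -(g_e ^ 2 * X₀ ^ 2) / (16 * a) ∧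
    (g_e ≠ 0 → -(g_e ^ 2 * X₀ ^ 2) / (16 * a) < 0) := by
  intro a VP
  have hVP'' : HasDerivAt (deriv VP) (-(g_e ^ 2 * X₀ ^ 2) / (8 * a)) ρ₀ :=
    hasDerivAt_deriv_ponderomotivePotential_self X₀ ρ₀ ha
  refine ⟨fun ρ hρ => hasDerivAt_ponderomotivePotential X₀ ρ₀ hρ,
    ponderomotiveForce_self X₀ ρ₀ ha, hVP''.differentiableAt, ?_, fun hg => ?_⟩
  · rw [hVP''.deriv, div_div]
    congr 1
    ring
  · have hnum : 0 < g_e ^ 2 * X₀ ^ 2 := by positivity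
    exact div_neg_of_neg_of_pos (neg_neg_of_pos hnum) (mul_pos (by norm_num) ha)
end

section
/- Let δ, γ, ω, B⊥ ∈ ℝ with B⊥ ≠ 0 and γω ≠ 0, and let θ₀, φ₀ ∈ ℝ satisfy cos θ₀ ≠ 0 together with the fixed-point equations −δ·sin θ₀ − B⊥·cos θ₀·cos φ₀ = 0 and (γω/2)·sin θ₀ + B⊥·sin φ₀ = 0. Then s := sin²θ₀ satisfies the quadratic equation (γ²ω²/4)·s² − (δ² + γ²ω²/4 + B⊥²)·s + B⊥² = 0; equivalently, n_z² := cos²θ₀ equals 1 − (1/2)·[1 + (4/(γ²ω²))·(δ² + B⊥²) ± √( (1 + (4/(γ²ω²))·(δ² + B⊥²))² − 16B⊥²/(γ²ω²) )] for one of the two choices of sign (and the discriminant is nonnegative). -/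
/-!
The polar angle obeys an equation free of `φ₀`: isolate `B cos θ₀ cos φ₀` and `B sin φ₀` in the two
fixed-point equations, multiply the second by `cos θ₀`, and add the squares. Replacing `cos² θ₀` by
`1 - sin² θ₀` turns the result into a quadratic in `sin² θ₀`, which division by its leading
coefficient `γ²ω²/4` brings to the form solved by the stated square roots.
-/

section FixedPoint

variable {R : Type*} [CommRing R] {δ κ B sθ cθ sφ cφ : R}

theorem fixedPoint_polar_equation (hφ : sφ ^ 2 + cφ ^ 2 = 1)
    (hδ : -δ * sθ - B * cθ * cφ = 0) (hκ : κ * sθ + B * sφ = 0) :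
    (δ ^ 2 + κ ^ 2 * cθ ^ 2) * sθ ^ 2 = B ^ 2 * cθ ^ 2 := by
  have detuning_torque : δ * sθ = -(B * cθ * cφ) := by linear_combination -hδ
  have damping_torque : κ * sθ = -(B * sφ) := by linear_combination hκ
  calc
    (δ ^ 2 + κ ^ 2 * cθ ^ 2) * sθ ^ 2 = (δ * sθ) ^ 2 + (κ * sθ) ^ 2 * cθ ^ 2 := by ring
    _ = B ^ 2 * cθ ^ 2 * (sφ ^ 2 + cφ ^ 2) := by rw [detuning_torque, damping_torque]; ring
    _ = B ^ 2 * cθ ^ 2 := by rw [hφ, mul_one]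

theorem fixedPoint_quadratic_equation (hθ : sθ ^ 2 + cθ ^ 2 = 1) (hφ : sφ ^ 2 + cφ ^ 2 = 1)
    (hδ : -δ * sθ - B * cθ * cφ = 0) (hκ : κ * sθ + B * sφ = 0) :
    κ ^ 2 * (sθ ^ 2) ^ 2 - (δ ^ 2 + κ ^ 2 + B ^ 2) * sθ ^ 2 + B ^ 2 = 0 := by
  have polar := fixedPoint_polar_equation hφ hδ hκ
  rw [eq_sub_of_add_eq' hθ] at polar
  linear_combination -polar

end FixedPoint

theorem quadratic_eq_zero_iff_sqrt_discrim {a b c x : ℝ} (ha : a ≠ 0) :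
    a * (x * x) + b * x + c = 0 ↔
      0 ≤ discrim a b c ∧
        (x = (-b + √(discrim a b c)) / (2 * a) ∨ x = (-b - √(discrim a b c)) / (2 * a)) := by
  have roots (discrim_nonneg : 0 ≤ discrim a b c) :=
    quadratic_eq_zero_iff ha (Real.mul_self_sqrt discrim_nonneg).symm x
  refine ⟨fun root ↦ ?_, fun ⟨discrim_nonneg, root⟩ ↦ (roots discrim_nonneg).mpr root⟩
  have discrim_nonneg : 0 ≤ discrim a b c :=
    discrim_eq_sq_of_quadratic_eq_zero root ▸ sq_nonneg _
  exact ⟨discrim_nonneg, (roots discrim_nonneg).mp root⟩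

/-- The rotating-frame fixed-point equations of the driven dissipative spin
force `s = sin²θ₀` to obey `(γ²ω²/4)s² − (δ² + γ²ω²/4 + B⊥²)s + B⊥² = 0`; equivalently
`n_z² = cos²θ₀ = 1 − (1/2)[A ± √(A² − 16B⊥²/(γ²ω²))]` with
`A = 1 + (4/(γ²ω²))(δ² + B⊥²)` for one of the two signs, the discriminant being
nonnegative. -/
theorem stmt_11 (δ γ ω B : ℝ) (hB : B ≠ 0) (hγω : γ * ω ≠ 0)
    (θ₀ φ₀ : ℝ) (hcos : Real.cos θ₀ ≠ 0)
    (h1 : -δ * Real.sin θ₀ - B * Real.cos θ₀ * Real.cos φ₀ = 0)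
    (h2 : γ * ω / 2 * Real.sin θ₀ + B * Real.sin φ₀ = 0) :
    let s : ℝ := Real.sin θ₀ ^ 2
    let A : ℝ := 1 + 4 / (γ ^ 2 * ω ^ 2) * (δ ^ 2 + B ^ 2)
    γ ^ 2 * ω ^ 2 / 4 * s ^ 2 - (δ ^ 2 + γ ^ 2 * ω ^ 2 / 4 + B ^ 2) * s + B ^ 2 = 0 ∧
    0 ≤ A ^ 2 - 16 * B ^ 2 / (γ ^ 2 * ω ^ 2) ∧
    (Real.cos θ₀ ^ 2 =
        1 - (1 / 2) * (A + Real.sqrt (A ^ 2 - 16 * B ^ 2 / (γ ^ 2 * ω ^ 2))) ∨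
      Real.cos θ₀ ^ 2 =
        1 - (1 / 2) * (A - Real.sqrt (A ^ 2 - 16 * B ^ 2 / (γ ^ 2 * ω ^ 2)))) := by
  intro s A
  have quadratic : γ ^ 2 * ω ^ 2 / 4 * s ^ 2 -
      (δ ^ 2 + γ ^ 2 * ω ^ 2 / 4 + B ^ 2) * s + B ^ 2 = 0 := by
    linear_combination fixedPoint_quadratic_equation (Real.sin_sq_add_cos_sq θ₀)
      (Real.sin_sq_add_cos_sq φ₀) h1 h2
  have monic : 1 * (s * s) + -A * s + 4 * B ^ 2 / (γ ^ 2 * ω ^ 2) = 0 := by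
    have hγ : γ ≠ 0 := left_ne_zero_of_mul hγω
    have hω : ω ≠ 0 := right_ne_zero_of_mul hγω
    simp only [A]
    field_simp
    linear_combination 4 * quadratic
  have discrim_eq : discrim 1 (-A) (4 * B ^ 2 / (γ ^ 2 * ω ^ 2)) =
      A ^ 2 - 16 * B ^ 2 / (γ ^ 2 * ω ^ 2) := by
    rw [discrim]; ring
  obtain ⟨discrim_nonneg, roots⟩ := (quadratic_eq_zero_iff_sqrt_discrim one_ne_zero).mp monic
  rw [discrim_eq] at discrim_nonneg roots
  have cos_sq : Real.cos θ₀ ^ 2 = 1 - s := Real.cos_sq' θ₀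
  refine ⟨quadratic, discrim_nonneg, roots.imp (fun root ↦ ?_) (fun root ↦ ?_)⟩
  · linear_combination cos_sq - root
  · linear_combination cos_sq - root
end

section
/- Let ω > 0 and define, for Δ > ω/2, h(Δ) = 1 − (2Δ/ω)·arcsin(ω/(2Δ))/√(1 − (ω/(2Δ))²). Then lim_{Δ → (ω/2)⁺} √(2Δ − ω)·h(Δ) = −(π/2)·√(ω/2). In particular h(Δ) → −∞ as Δ decreases to ω/2, diverging as −(π/2)·√(ω/2)·(2Δ − ω)^{−1/2}; i.e., the Ponderomotive potential diverges as −1/√δ with detuning δ = 2Δ − ω → 0⁺. -/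
/-!
In the dimensionless variable `x = ω / (2Δ)` the only singular factor of `h` at the gap edge `x = 1`
is `√(1 - x ^ 2) = √(1 - x) * √(1 + x)`. Multiplying by `√(1 - x)` removes it and leaves
`-arcsin 1 / √2` in the limit; the factor `√(2Δ) → √ω` comes from `√(2Δ - ω) = √(2Δ) * √(1 - x)`.
-/

section GapEdge

open Filter Set Topology

section OrderedField

variable {α 𝕜 : Type*} [Field 𝕜] [LinearOrder 𝕜] [IsStrictOrderedRing 𝕜]
  [TopologicalSpace 𝕜] [OrderTopology 𝕜]

theorem tendsto_atBot_of_tendsto_mul_of_neg {l : Filter α} {f g : α → 𝕜} {c : 𝕜} (hc : c < 0)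
    (hf : Tendsto f l (𝓝[>] 0)) (hfg : Tendsto (fun a => f a * g a) l (𝓝 c)) :
    Tendsto g l atBot := by
  refine (hfg.neg_mul_atTop hc hf.inv_tendsto_nhdsGT_zero).congr' ?_
  filter_upwards [hf.eventually self_mem_nhdsWithin] with a (ha : 0 < f a)
  rw [Pi.inv_apply, mul_comm (f a), mul_inv_cancel_right₀ ha.ne']

theorem tendsto_const_div_nhdsGT_nhdsLT_one {a : 𝕜} (ha : 0 < a) :
    Tendsto (fun y => a / y) (𝓝[>] a) (𝓝[<] 1) := by
  have hcont : ContinuousAt (fun y => a / y) a :=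
    continuousAt_const.div continuousAt_id ha.ne'
  have hmaps : MapsTo (fun y => a / y) (Ioi a) (Iio 1) :=
    fun y (hy : a < y) => (div_lt_one (ha.trans hy)).2 hy
  simpa only [div_self ha.ne'] using hcont.continuousWithinAt.tendsto_nhdsWithin hmaps

theorem tendsto_const_mul_nhdsGT {c : 𝕜} (hc : 0 < c) (a : 𝕜) :
    Tendsto (fun y => c * y) (𝓝[>] a) (𝓝[>] (c * a)) :=
  (continuous_const_mul c).continuousWithinAt.tendsto_nhdsWithin
    fun _ hy => mul_lt_mul_of_pos_left hy hc

end OrderedField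

theorem tendsto_sqrt_one_sub_nhdsLT_one : Tendsto (fun x : ℝ => √(1 - x)) (𝓝[<] 1) (𝓝[>] 0) := by
  have hcont : ContinuousAt (fun x : ℝ => √(1 - x)) 1 := by fun_prop
  have hmaps : MapsTo (fun x : ℝ => √(1 - x)) (Iio 1) (Ioi 0) :=
    fun x hx => Real.sqrt_pos.2 (sub_pos.2 hx)
  simpa only [sub_self, Real.sqrt_zero] using hcont.continuousWithinAt.tendsto_nhdsWithin hmaps

theorem tendsto_sqrt_one_sub_mul_div_sqrt_one_sub_sq {F : ℝ → ℝ} {a : ℝ}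
    (hF : Tendsto F (𝓝[<] 1) (𝓝 a)) :
    Tendsto (fun x => √(1 - x) * (F x / √(1 - x ^ 2))) (𝓝[<] 1) (𝓝 (a / √2)) := by
  have hsqrt : Tendsto (fun x : ℝ => √(1 + x)) (𝓝[<] 1) (𝓝 √2) := by
    have hcont : ContinuousAt (fun x : ℝ => √(1 + x)) 1 := by fun_prop
    simpa only [one_add_one_eq_two] using hcont.continuousWithinAt.tendsto
  refine (hF.div hsqrt (by positivity)).congr' ?_
  filter_upwards [self_mem_nhdsWithin] with x (hx : x < 1)
  have hpos : 0 < 1 - x := sub_pos.2 hx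
  have hfactor : √(1 - x ^ 2) = √(1 - x) * √(1 + x) := by
    rw [← Real.sqrt_mul hpos.le]
    ring_nf
  rw [Pi.div_apply, hfactor, mul_div_assoc', mul_div_mul_left _ _ (Real.sqrt_pos.2 hpos).ne']

theorem tendsto_sqrt_sub_mul_comp_div {g : ℝ → ℝ} {c ω : ℝ} (hω : 0 < ω)
    (hg : Tendsto (fun x => √(1 - x) * g x) (𝓝[<] 1) (𝓝 c)) :
    Tendsto (fun E => √(E - ω) * g (ω / E)) (𝓝[>] ω) (𝓝 (√ω * c)) := by
  have hsqrt : Tendsto (fun E => √E) (𝓝[>] ω) (𝓝 √ω) :=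
    Real.continuous_sqrt.continuousWithinAt
  refine (hsqrt.mul (hg.comp (tendsto_const_div_nhdsGT_nhdsLT_one hω))).congr' ?_
  filter_upwards [self_mem_nhdsWithin] with E (hE : ω < E)
  have hE₀ : 0 < E := hω.trans hE
  have hscale : √(E - ω) = √E * √(1 - ω / E) := by
    rw [← Real.sqrt_mul hE₀.le, mul_one_sub, mul_div_cancel₀ _ hE₀.ne']
  rw [hscale, mul_assoc, Function.comp_apply]

/-- The factor `h` of the ponderomotive potential `V_P(Δ) = (E₀² / ω²) (n / m) h(Δ)`, as a function
of the dimensionless frequency `x = ω / (2Δ)`; the prefactor `2Δ / ω` becomes `x⁻¹`. -/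
noncomputable def ponderomotiveFactor (x : ℝ) : ℝ :=
  1 - x⁻¹ * Real.arcsin x / √(1 - x ^ 2)

theorem tendsto_sqrt_one_sub_mul_ponderomotiveFactor :
    Tendsto (fun x => √(1 - x) * ponderomotiveFactor x) (𝓝[<] 1) (𝓝 (-(Real.pi / 2) / √2)) := by
  have harcsin : Tendsto (fun x => x⁻¹ * Real.arcsin x) (𝓝[<] 1) (𝓝 (Real.pi / 2)) := by
    have hcont : ContinuousAt (fun x => x⁻¹ * Real.arcsin x) 1 :=
      (continuousAt_inv₀ one_ne_zero).mul Real.continuous_arcsin.continuousAt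
    simpa only [inv_one, one_mul, Real.arcsin_one] using hcont.continuousWithinAt.tendsto
  have hvanish : Tendsto (fun x : ℝ => √(1 - x)) (𝓝[<] 1) (𝓝 0) :=
    tendsto_sqrt_one_sub_nhdsLT_one.mono_right nhdsWithin_le_nhds
  simpa only [ponderomotiveFactor, mul_sub, mul_one, zero_sub, neg_div] using
    hvanish.sub (tendsto_sqrt_one_sub_mul_div_sqrt_one_sub_sq harcsin)

theorem tendsto_ponderomotiveFactor_atBot : Tendsto ponderomotiveFactor (𝓝[<] 1) atBot := by
  have hneg : -(Real.pi / 2) / √2 < 0 :=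
    div_neg_of_neg_of_pos (neg_lt_zero.2 Real.pi_div_two_pos) (by positivity)
  exact tendsto_atBot_of_tendsto_mul_of_neg hneg tendsto_sqrt_one_sub_nhdsLT_one
    tendsto_sqrt_one_sub_mul_ponderomotiveFactor

end GapEdge

/-- With `h(Δ) = 1 − (2Δ/ω)·arcsin(ω/(2Δ))/√(1 − (ω/(2Δ))²)` for
`Δ > ω/2`, one has `√(2Δ − ω)·h(Δ) → −(π/2)·√(ω/2)` as `Δ → (ω/2)⁺`; in particular
`h(Δ) → −∞`, i.e. the Ponderomotive potential diverges as `−1/√δ` with detuning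
`δ = 2Δ − ω → 0⁺`. -/
theorem stmt_17 (ω : ℝ) (hω : 0 < ω) :
    let h : ℝ → ℝ := fun Δ =>
      1 - (2 * Δ / ω) * Real.arcsin (ω / (2 * Δ)) / Real.sqrt (1 - (ω / (2 * Δ)) ^ 2)
    Filter.Tendsto (fun Δ => Real.sqrt (2 * Δ - ω) * h Δ)
      (nhdsWithin (ω / 2) (Set.Ioi (ω / 2)))
      (nhds (-(Real.pi / 2) * Real.sqrt (ω / 2))) ∧
    Filter.Tendsto h (nhdsWithin (ω / 2) (Set.Ioi (ω / 2))) Filter.atBot := by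
  intro h
  have hh : h = fun Δ => ponderomotiveFactor (ω / (2 * Δ)) := by
    funext Δ
    simp only [h, ponderomotiveFactor, inv_div]
  have hgap : Filter.Tendsto (fun Δ => 2 * Δ) (nhdsWithin (ω / 2) (Set.Ioi (ω / 2)))
      (nhdsWithin ω (Set.Ioi ω)) := by
    simpa only [mul_div_cancel₀ ω two_ne_zero] using tendsto_const_mul_nhdsGT two_pos (ω / 2)
  have hlimit : √ω * (-(Real.pi / 2) / √2) = -(Real.pi / 2) * √(ω / 2) := by
    rw [Real.sqrt_div hω.le, mul_div_left_comm]
  rw [hh, ← hlimit]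
  exact ⟨(tendsto_sqrt_sub_mul_comp_div hω tendsto_sqrt_one_sub_mul_ponderomotiveFactor).comp hgap,
    tendsto_ponderomotiveFactor_atBot.comp
      ((tendsto_const_div_nhdsGT_nhdsLT_one hω).comp hgap)⟩
end
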